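/- (Correctness of loss-augmented (cost-augmented) scoring for arc-eager.) Fix n ≥ 1, an arc-eager parameterization (f_sh, f_ra, f_rl, f_re), and a gold head assignment h* : {1,…,n} → {0,…,n}. Define the augmented parameterization f' by f'_sh = f_sh, f'_re = f_re, f'_rl(i, j) = f_rl(i, j) + 1[h*(i) ≠ j], and f'_ra(k, i) = f_ra(k, i) + 1[h*(i) ≠ k], where 1[·] is the 0/1 indicator. Then for every complete arc-eager transition sequence t for a sentence of length n, F'(t) = F(t) + cost(t), where cost(t) = |{ m ∈ {1,…,n} : (h*(m), m) ∉ A(t) }| is the number of mis-attached nodes of t relative to h*. -/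

import Mathlib

/-- A parser configuration: a stack of indices (head of the list = top of stack),
a buffer of indices (head of the list = front of buffer), and a set of arcs
`(h, m)` meaning `h` is the head of modifier `m`. -/
structure Config where
  stack : List ℕ
  buffer : List ℕ
  arcs : Finset (ℕ × ℕ)

/-- Initial configuration for a sentence of length `n`:
empty stack, buffer `[0, 1, …, n]` (ROOT is index 0), empty arc set. -/
def initConfig (n : ℕ) : Config := ⟨[], List.range (n + 1), ∅⟩

/-- Stack-top feature of a configuration: `none` plays the role of the dummy index ⊥
used when the stack is empty. -/
def stackFeat (c : Config) : Option ℕ := c.stack.head?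

/-- Buffer-front feature of a configuration: the end-marker index `n + 1`
when the buffer is empty. -/
def bufFeat (n : ℕ) (c : Config) : ℕ := c.buffer.headD (n + 1)

/-- Arc-eager transition labels. -/
inductive ETrans
  | sh | rl | ra | re
deriving DecidableEq

/-- Single arc-eager transitions between configurations. -/
inductive EStep : Config → ETrans → Config → Prop
  | sh (σ b β A) : EStep ⟨σ, b :: β, A⟩ .sh ⟨b :: σ, β, A⟩
  | rl (s σ b β A) (h : ∀ x, (x, s) ∉ A) :
      EStep ⟨s :: σ, b :: β, A⟩ .rl ⟨σ, b :: β, insert (b, s) A⟩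
  | ra (s σ b β A) :
      EStep ⟨s :: σ, b :: β, A⟩ .ra ⟨b :: s :: σ, β, insert (s, b) A⟩
  | re (s σ β A) (h : ∃ x, (x, s) ∈ A) :
      EStep ⟨s :: σ, β, A⟩ .re ⟨σ, β, A⟩

/-- `ETrace c t c'` holds when `t` is a list of (configuration, transition) pairs,
each transition taken in the recorded configuration, leading from `c` to `c'`. -/
inductive ETrace : Config → List (Config × ETrans) → Config → Prop
  | nil (c) : ETrace c [] c
  | cons {c c' cf : Config} {τ : ETrans} {rest} :
      EStep c τ c' → ETrace c' rest cf → ETrace c ((c, τ) :: rest) cf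

/-- Score of an arc-eager transition sequence under parameterization
`(fsh, fra, frl, fre)`: the sum, over the transitions, of the corresponding
scoring function evaluated at the feature pair of the configuration in which
the transition is taken. -/
def escore (n : ℕ) (fsh fra frl fre : Option ℕ → ℕ → ℝ)
    (t : List (Config × ETrans)) : ℝ :=
  (t.map fun e =>
    (match e.2 with
      | ETrans.sh => fsh
      | ETrans.ra => fra
      | ETrans.rl => frl
      | ETrans.re => fre) (stackFeat e.1) (bufFeat n e.1)).sum

/-- Arc-hybrid transition labels. -/
inductive HTrans
  | sh | rr | rl
deriving DecidableEq

/-- Single arc-hybrid transitions between configurations. -/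
inductive HStep : Config → HTrans → Config → Prop
  | sh (σ b β A) : HStep ⟨σ, b :: β, A⟩ .sh ⟨b :: σ, β, A⟩
  | rr (s0 s1 σ β A) :
      HStep ⟨s0 :: s1 :: σ, β, A⟩ .rr ⟨s1 :: σ, β, insert (s1, s0) A⟩
  | rl (s σ b β A) :
      HStep ⟨s :: σ, b :: β, A⟩ .rl ⟨σ, b :: β, insert (b, s) A⟩

/-- `HTrace c t c'` holds when `t` is a list of (configuration, transition) pairs,
each transition taken in the recorded configuration, leading from `c` to `c'`. -/
inductive HTrace : Config → List (Config × HTrans) → Config → Prop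
  | nil (c) : HTrace c [] c
  | cons {c c' cf : Config} {τ : HTrans} {rest} :
      HStep c τ c' → HTrace c' rest cf → HTrace c ((c, τ) :: rest) cf

/-- Score of an arc-hybrid transition sequence under parameterization
`(gsh, grr, grl)`. -/
def hscore (n : ℕ) (gsh grr grl : Option ℕ → ℕ → ℝ)
    (t : List (Config × HTrans)) : ℝ :=
  (t.map fun e =>
    (match e.2 with
      | HTrans.sh => gsh
      | HTrans.rr => grr
      | HTrans.rl => grl) (stackFeat e.1) (bufFeat n e.1)).sum

/-! A nonzero augmentation term is paid exactly when an arc is created, so the extra score is the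
total weight of the final arcs provided no arc is created twice. Since the stack followed by the
buffer is always strictly increasing, no index is attached twice and ROOT never gets a head while
staying on the stack; as no index ever gets lost, the arcs of a complete sequence are the graph of a
head function on `{1, …, n}`. -/

theorem injOn_snd_insert {α β : Type*} [DecidableEq α] [DecidableEq β] {A : Finset (α × β)}
    {h : α} {m : β} (hA : Set.InjOn Prod.snd (A : Set (α × β))) (hm : m ∉ A.image Prod.snd) :
    Set.InjOn Prod.snd (↑(insert (h, m) A) : Set (α × β)) := by
  have hmA : m ∉ Prod.snd '' (A : Set (α × β)) := by exact_mod_cast hm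
  rw [Finset.coe_insert, Set.injOn_insert fun ha => hmA ⟨_, ha, rfl⟩]
  exact ⟨hA, hmA⟩

theorem sum_ite_ne_eq_card_filter_image_snd {α β R : Type*} [DecidableEq α] [DecidableEq β]
    [NonAssocSemiring R] (A : Finset (α × β)) (hA : Set.InjOn Prod.snd (A : Set (α × β)))
    (head : β → α) :
    ∑ a ∈ A, (if head a.2 ≠ a.1 then (1 : R) else 0) =
      ((A.image Prod.snd).filter fun m => (head m, m) ∉ A).card := by
  have head_ne_iff : ∀ a ∈ A, head a.2 ≠ a.1 ↔ (head a.2, a.2) ∉ A := fun a ha =>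
    not_congr ⟨fun h => h ▸ ha, fun h => congrArg Prod.fst (hA h ha rfl)⟩
  rw [← Finset.sum_boole, Finset.sum_image hA]
  exact Finset.sum_congr rfl fun a ha => if_congr (head_ne_iff a ha) rfl rfl

/-- The indices that have a head in the arc set `A`. -/
abbrev modifiers (A : Finset (ℕ × ℕ)) : Finset ℕ := A.image Prod.snd

theorem mem_modifiers {A : Finset (ℕ × ℕ)} {m : ℕ} : m ∈ modifiers A ↔ ∃ h, (h, m) ∈ A := by
  simp

namespace Config

/-- The indices still in play or already attached; transitions conserve this set. -/
def indices (c : Config) : Finset ℕ :=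
  c.stack.toFinset ∪ c.buffer.toFinset ∪ modifiers c.arcs

/-- The indices still in play, in sentence order: the stack is reversed because the head of
`c.stack` is its top. -/
def pending (c : Config) : List ℕ := c.stack.reverse ++ c.buffer

/-- The invariant of the configurations reachable from an initial one, strong enough to show that
no index is attached twice and that ROOT has no head when parsing ends. -/
structure IsAdmissible (c : Config) : Prop where
  ordered : c.pending.Pairwise (· < ·)
  buffer_unattached : ∀ b ∈ c.buffer, b ∉ modifiers c.arcs
  unique_heads : Set.InjOn Prod.snd (c.arcs : Set (ℕ × ℕ))
  root_unattached : 0 ∈ c.stack → 0 ∉ modifiers c.arcs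

end Config

open Config

theorem isAdmissible_initConfig (n : ℕ) : (initConfig n).IsAdmissible where
  ordered := by simp [pending, initConfig, List.pairwise_lt_range]
  buffer_unattached := by simp [initConfig]
  unique_heads := by simp [initConfig]
  root_unattached := by simp [initConfig]

theorem indices_initConfig (n : ℕ) : (initConfig n).indices = Finset.range (n + 1) := by
  simp [indices, initConfig, Finset.ext_iff]

theorem EStep.indices_eq {c c' : Config} {τ : ETrans} (hs : EStep c τ c') :
    c'.indices = c.indices := by
  ext m
  cases hs <;>
    simp only [indices, Finset.mem_union, List.mem_toFinset, List.mem_cons, mem_modifiers,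
      Finset.mem_insert, Prod.mk.injEq] <;>
    grind

theorem EStep.pending_sublist {c c' : Config} {τ : ETrans} (hs : EStep c τ c') :
    c'.pending.Sublist c.pending := by
  cases hs <;> simp [pending]

theorem EStep.isAdmissible {c c' : Config} {τ : ETrans} (hs : EStep c τ c')
    (hc : c.IsAdmissible) : c'.IsAdmissible := by
  obtain ⟨hord, hbuf, huniq, hroot⟩ := hc
  have hord' := hord.sublist hs.pending_sublist
  cases hs with
  | sh σ b β A =>
    have hb : b ∉ modifiers A := hbuf b List.mem_cons_self
    exact
      { ordered := hord'
        buffer_unattached := fun x hx => hbuf x (List.mem_cons_of_mem b hx)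
        unique_heads := huniq
        root_unattached := by grind }
  | rl s σ b β A hfree =>
    have hs : s ∉ modifiers A := by simpa using hfree
    have lt_s : ∀ x ∈ σ, x < s := by grind [pending]
    have s_lt : ∀ x ∈ b :: β, s < x := by grind [pending]
    have hmods : modifiers (insert (b, s) A) = insert s (modifiers A) := Finset.image_insert ..
    exact
      { ordered := hord'
        buffer_unattached := by grind
        unique_heads := injOn_snd_insert huniq hs
        root_unattached := by grind }
  | ra s σ b β A =>
    have hb : b ∉ modifiers A := hbuf b List.mem_cons_self
    have s_lt_b : s < b := by grind [pending]
    have b_lt : ∀ x ∈ β, b < x := by grind [pending]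
    have hmods : modifiers (insert (s, b) A) = insert b (modifiers A) := Finset.image_insert ..
    exact
      { ordered := hord'
        buffer_unattached := by grind
        unique_heads := injOn_snd_insert huniq hb
        root_unattached := by grind }
  | re s σ β A =>
    exact
      { ordered := hord'
        buffer_unattached := hbuf
        unique_heads := huniq
        root_unattached := fun h0 => hroot (List.mem_cons_of_mem s h0) }

theorem ETrace.indices_eq {c c' : Config} {t : List (Config × ETrans)} (ht : ETrace c t c') :
    c'.indices = c.indices := by
  induction ht with
  | nil => rfl
  | cons hs _ ih => exact ih.trans hs.indices_eq

theorem ETrace.isAdmissible {c c' : Config} {t : List (Config × ETrans)} (ht : ETrace c t c')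
    (hc : c.IsAdmissible) : c'.IsAdmissible := by
  induction ht with
  | nil => exact hc
  | cons hs _ ih => exact ih (hs.isAdmissible hc)

theorem ETrace.modifiers_eq_Icc {n : ℕ} {t : List (Config × ETrans)} {A : Finset (ℕ × ℕ)}
    (ht : ETrace (initConfig n) t ⟨[0], [], A⟩) : modifiers A = Finset.Icc 1 n := by
  have hroot : 0 ∉ modifiers A :=
    (ht.isAdmissible (isAdmissible_initConfig n)).root_unattached (List.mem_singleton_self 0)
  have hindices : insert 0 (modifiers A) = Finset.range (n + 1) := by
    rw [← indices_initConfig, ← ht.indices_eq]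
    simp [indices]
  rw [← Finset.erase_insert hroot, hindices]
  ext m
  simp only [Finset.mem_erase, Finset.mem_range, Finset.mem_Icc]
  lia

theorem escore_cons (n : ℕ) (fsh fra frl fre : Option ℕ → ℕ → ℝ) (e : Config × ETrans)
    (t : List (Config × ETrans)) :
    escore n fsh fra frl fre (e :: t) =
      escore n fsh fra frl fre [e] + escore n fsh fra frl fre t := by
  simp [escore]

theorem escore_add (n : ℕ) (fsh fra frl fre gsh gra grl gre : Option ℕ → ℕ → ℝ)
    (t : List (Config × ETrans)) :
    escore n (fsh + gsh) (fra + gra) (frl + grl) (fre + gre) t =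
      escore n fsh fra frl fre t + escore n gsh gra grl gre t := by
  rw [escore, escore, escore, ← List.sum_map_add]
  congr! 3 with e
  cases e.2 <;> rfl

/-- The right-attach component of the parameterization that scores each created arc `a` by `w a`:
`ra` creates the arc from the stack top to the buffer front. -/
def raWeight (w : ℕ × ℕ → ℝ) : Option ℕ → ℕ → ℝ := fun s b => s.elim 0 fun h => w (h, b)

/-- The left-reduce component of the parameterization that scores each created arc `a` by `w a`:
`rl` creates the arc from the buffer front to the stack top. -/
def rlWeight (w : ℕ × ℕ → ℝ) : Option ℕ → ℕ → ℝ := fun s b => s.elim 0 fun m => w (b, m)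

theorem EStep.sum_arcs {c c' : Config} {τ : ETrans} (n : ℕ) (w : ℕ × ℕ → ℝ) (hs : EStep c τ c')
    (hbuf : ∀ b ∈ c.buffer, b ∉ modifiers c.arcs) :
    ∑ a ∈ c'.arcs, w a =
      ∑ a ∈ c.arcs, w a + escore n 0 (raWeight w) (rlWeight w) 0 [(c, τ)] := by
  cases hs with
  | sh | re => simp [escore]
  | rl s σ b β A hfree =>
    simp [Finset.sum_insert (hfree b), escore, rlWeight, stackFeat, bufFeat, add_comm]
  | ra s σ b β A =>
    have hfresh : (s, b) ∉ A := fun hA =>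
      hbuf b List.mem_cons_self (mem_modifiers.2 ⟨s, hA⟩)
    simp [Finset.sum_insert hfresh, escore, raWeight, stackFeat, bufFeat, add_comm]

theorem ETrace.sum_arcs {c c' : Config} {t : List (Config × ETrans)} (n : ℕ) (w : ℕ × ℕ → ℝ)
    (ht : ETrace c t c') (hc : c.IsAdmissible) :
    ∑ a ∈ c'.arcs, w a = ∑ a ∈ c.arcs, w a + escore n 0 (raWeight w) (rlWeight w) 0 t := by
  induction ht with
  | nil => simp [escore]
  | cons hs _ ih =>
    rw [escore_cons, ih (hs.isAdmissible hc), hs.sum_arcs n w hc.buffer_unattached, add_assoc]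

theorem arc_eager_loss_augmented_general (n : ℕ) (fsh fra frl fre : Option ℕ → ℕ → ℝ)
    (w : ℕ × ℕ → ℝ) {t : List (Config × ETrans)} {c : Config} (ht : ETrace (initConfig n) t c) :
    escore n fsh (fra + raWeight w) (frl + rlWeight w) fre t =
      escore n fsh fra frl fre t + ∑ a ∈ c.arcs, w a := by
  have hw : ∑ a ∈ c.arcs, w a = escore n 0 (raWeight w) (rlWeight w) 0 t := by
    simpa [initConfig] using ht.sum_arcs n w (isAdmissible_initConfig n)
  rw [hw, ← escore_add, add_zero, add_zero]

/-- **Correctness of loss-augmented (cost-augmented) scoring for arc-eager.**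
With gold head assignment `hstar : {1,…,n} → {0,…,n}`, augmenting
`frl(i, j)` by `1[hstar i ≠ j]` and `fra(k, i)` by `1[hstar i ≠ k]`
adds to the score of every complete transition sequence exactly its cost,
the number of mis-attached nodes. -/
theorem arc_eager_loss_augmented
    (n : ℕ) (hn : 1 ≤ n)
    (fsh fra frl fre : Option ℕ → ℕ → ℝ)
    (hstar : ℕ → ℕ)
    (hdom : ∀ m, 1 ≤ m → m ≤ n → hstar m ≤ n)
    (t : List (Config × ETrans)) (A : Finset (ℕ × ℕ))
    (ht : ETrace (initConfig n) t ⟨[0], [], A⟩) :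
    escore n fsh
        (fun kk i => fra kk i + kk.elim 0 (fun kv => if hstar i ≠ kv then (1 : ℝ) else 0))
        (fun s j => frl s j + s.elim 0 (fun i => if hstar i ≠ j then (1 : ℝ) else 0))
        fre t
      = escore n fsh fra frl fre t
        + (((Finset.Icc 1 n).filter (fun m => (hstar m, m) ∉ A)).card : ℝ) := by
  have hA := (ht.isAdmissible (isAdmissible_initConfig n)).unique_heads
  rw [← ht.modifiers_eq_Icc, ← sum_ite_ne_eq_card_filter_image_snd A hA hstar]
  exact arc_eager_loss_augmented_general n fsh fra frl fre
    (fun a => if hstar a.2 ≠ a.1 then 1 else 0) ht
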